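/- For all integers n ≥ 0 and 0 ≤ i ≤ n, one has Σ_{k=0}^{n} Σ_{j=0}^{n+k−2i} g_{n,i}(k,j) = (−1)^n · 2^{n−i}, where the inner sum runs over integers j with 0 ≤ j ≤ n+k−2i and is empty when n+k−2i < 0. -/

import Mathlib

/-- `f_n(k) = (−1)^k · 2^{n−k} · (3n−3k+2) · C_{n−k} · (n+k+1)!·(2n−k+1)! / (k!·(3n−k+2)!)`. -/
def fnk (n k : ℕ) : ℚ :=
  (-1)^k * 2^(n-k) * (3*(n:ℚ) - 3*(k:ℚ) + 2) * (catalan (n-k) : ℚ) *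
    (Nat.factorial (n+k+1) : ℚ) * (Nat.factorial (2*n-k+1) : ℚ) /
    ((Nat.factorial k : ℚ) * (Nat.factorial (3*n-k+2) : ℚ))

/-- `g_{n,i}(k,j) = 2^{k−n} · f_n(k) · binom(2n+1−i−k, j)` (with `binom(m,j) = 0` for `j > m`). -/
def gnik (n i k j : ℕ) : ℚ :=
  fnk n k / 2^(n-k) * (Nat.choose (2*n+1-i-k) j : ℚ)

/-!
Put `d = n - i` and `l = n - k`. Up to the sign `(-1) ^ n` the double sum becomes
`∑ l, (3 * l + 2) * w l * P d l`, where `w` is hypergeometric in `l` and `P d l` is the sum of the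
first `2 * d + 1 - l` binomial coefficients in row `d + l + 1` of Pascal's triangle. By Pascal's
rule `P (d + 1) l - 2 * P d l` is hypergeometric as well, equal to `(3 * d + 4) * q (d + 1) l`.
It therefore suffices that `∑ l, (3 * l + 2) * w l * q d l` vanishes for `1 ≤ d ≤ n`: the double sum
then doubles at each step in `d`, starting from `1` at `d = 0`. Creative telescoping yields a linear
recurrence between the values of this last sum at `d` and `d + 1`. Its coefficient at `d` contains
the factor `d`, so the value at `1` is zero, and hence so are all the later ones.
-/

open Finset
open scoped Nat

section InvFactorial

/-- The reciprocal factorial `1 / z!` on the integers, which is `0` at negative `z` (the values of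
the entire function `1 / Γ(z + 1)`). With this convention hypergeometric terms vanish outside their
natural support, and their ratios hold with no case distinction. -/
def invFactorial : ℤ → ℚ
  | (m : ℕ) => (m ! : ℚ)⁻¹
  | .negSucc _ => 0

lemma invFactorial_natCast (m : ℕ) : invFactorial m = (m ! : ℚ)⁻¹ := rfl

lemma invFactorial_of_neg {z : ℤ} (hz : z < 0) : invFactorial z = 0 := by
  obtain ⟨m, rfl⟩ := Int.eq_negSucc_of_lt_zero hz
  rfl

lemma invFactorial_eq_mul_of_eq_add_one {z w : ℤ} (h : w = z + 1) :
    invFactorial z = w * invFactorial w := by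
  subst h
  obtain hz | rfl | hz : z + 1 < 0 ∨ z = -1 ∨ 0 ≤ z := by lia
  · rw [invFactorial_of_neg hz, invFactorial_of_neg (by lia), mul_zero]
  · simp [invFactorial_of_neg]
  · lift z to ℕ using hz
    rw [← Nat.cast_succ, invFactorial_natCast, invFactorial_natCast, Nat.factorial_succ]
    push_cast
    field_simp

lemma cast_choose_eq_mul_invFactorial (M r : ℕ) :
    (M.choose r : ℚ) = M ! * invFactorial r * invFactorial (M - r) := by
  obtain hr | hr := le_or_gt r M
  · rw [← Nat.cast_sub hr, invFactorial_natCast, invFactorial_natCast, Nat.cast_choose ℚ hr]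
    field_simp
  · rw [Nat.choose_eq_zero_of_lt hr, invFactorial_of_neg (by lia : (M - r : ℤ) < 0)]
    simp

end InvFactorial

section PartialRowSum

lemma sum_range_succ_choose_succ (M r : ℕ) :
    ∑ j ∈ range (r + 1), (M + 1).choose j = 2 * ∑ j ∈ range r, M.choose j + M.choose r := by
  simp only [sum_range_succ', Nat.choose_succ_succ, sum_add_distrib, Nat.choose_zero_right]
  have shift := sum_range_succ' M.choose r
  rw [sum_range_succ, Nat.choose_zero_right] at shift
  lia

lemma sum_range_toNat_choose_succ (M : ℕ) (s : ℤ) :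
    (∑ j ∈ range (s + 2).toNat, (M + 1).choose j : ℚ) = 2 * ∑ j ∈ range s.toNat, (M.choose j : ℚ)
      + (M + s + 2) * (M ! * invFactorial (s + 1) * invFactorial (M - s)) := by
  obtain hs | rfl | hs : s + 1 < 0 ∨ s = -1 ∨ 0 ≤ s := by lia
  · simp [invFactorial_of_neg hs, Int.toNat_of_nonpos (by lia : s + 2 ≤ 0),
      Int.toNat_of_nonpos (by lia : s ≤ 0)]
  · have hM : invFactorial (M - (-1)) = ((M + 1)! : ℚ)⁻¹ := invFactorial_natCast (M + 1)
    have h0 : invFactorial (-1 + 1) = 1 := by simpa using invFactorial_natCast 0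
    rw [hM, h0, Nat.factorial_succ]
    simp only [show (-1 + 2 : ℤ).toNat = 1 from rfl, show (-1 : ℤ).toNat = 0 from rfl,
      sum_range_one, sum_range_zero, Nat.choose_zero_right]
    push_cast
    field_simp
    ring
  · lift s to ℕ using hs
    have two_steps : ∑ j ∈ range (s + 2), (M + 1).choose j
        = 2 * ∑ j ∈ range s, M.choose j + (2 * M.choose s + M.choose (s + 1)) := by
      rw [sum_range_succ_choose_succ, sum_range_succ]
      ring
    have h_succ := invFactorial_eq_mul_of_eq_add_one (rfl : (s + 1 : ℤ) = s + 1)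
    have h_sub := invFactorial_eq_mul_of_eq_add_one (by ring : (M - s : ℤ) = M - (s + 1) + 1)
    have two_steps_rat := congrArg (Nat.cast (R := ℚ)) two_steps
    push_cast [cast_choose_eq_mul_invFactorial] at two_steps_rat h_succ h_sub
    rw [Int.toNat_natCast, show (s + 2 : ℤ).toNat = s + 2 by lia]
    push_cast [cast_choose_eq_mul_invFactorial, two_steps_rat, h_succ, h_sub]
    ring

/-- The truncated binomial row sum `∑_{j = 0}^{2d - l} binom(d + l + 1, j)`, the inner sum of the
theorem for `d = n - i` and `l = n - k`; it is empty for `2d < l`. -/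
def partialRowSum (d l : ℕ) : ℚ :=
  ∑ j ∈ range (2 * d + 1 - l), ((d + l + 1).choose j : ℚ)

/-- The hypergeometric term `(d + l)! / ((2d - l)! (2l - d + 1)!)`, which is proportional to
the defect of `partialRowSum` from doubling in `d`. -/
def doublingDefect (d l : ℕ) : ℚ :=
  (d + l)! * invFactorial (2 * d - l) * invFactorial (2 * l - d + 1)

lemma partialRowSum_zero_left (l : ℕ) : partialRowSum 0 l = if l = 0 then 1 else 0 := by
  cases l <;> simp [partialRowSum]

lemma partialRowSum_succ (d l : ℕ) :
    partialRowSum (d + 1) l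
      = 2 * partialRowSum d l + (3 * d + 4) * doublingDefect (d + 1) l := by
  have h := sum_range_toNat_choose_succ (d + l + 1) (2 * d + 1 - l)
  rw [show (2 * d + 1 - l + 2 : ℤ).toNat = 2 * (d + 1) + 1 - l by lia,
    show (2 * d + 1 - l : ℤ).toNat = 2 * d + 1 - l by lia] at h
  rw [partialRowSum, partialRowSum, doublingDefect, show d + 1 + l = d + l + 1 by ring, h]
  push_cast
  ring_nf

end PartialRowSum

section CatalanWeight

lemma add_two_mul_catalan_succ (l : ℕ) :
    (l + 2) * catalan (l + 1) = 2 * (2 * l + 1) * catalan l := by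
  apply Nat.eq_of_mul_eq_mul_left l.succ_pos
  have h := Nat.succ_mul_centralBinom_succ l
  rw [← succ_mul_catalan_eq_centralBinom, ← succ_mul_catalan_eq_centralBinom] at h
  linarith

/-- The hypergeometric weight `(-1)^l C_l (2n - l + 1)! (n + l + 1)! / ((n - l)! (2n + l + 2)!)`,
which is `0` for `n < l`. For `l ≤ n`, `(3l + 2)` times it is `(-1)^n 2^{-l} f_n(n - l)`. -/
def catalanWeight (n l : ℕ) : ℚ :=
  (-1) ^ l * catalan l * (2 * n + 1 - l)! * (n + l + 1)! * invFactorial (n - l) / (2 * n + l + 2)!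

lemma catalanWeight_of_lt {n l : ℕ} (h : n < l) : catalanWeight n l = 0 := by
  simp [catalanWeight, invFactorial_of_neg (by lia : (n - l : ℤ) < 0)]

lemma catalanWeight_zero_right (n : ℕ) : 2 * catalanWeight n 0 = 1 := by
  have h : invFactorial (n - (0 : ℕ)) = (n ! : ℚ)⁻¹ := by simp [invFactorial_natCast]
  simp only [catalanWeight, h, add_zero, Nat.sub_zero, Nat.factorial_succ, catalan_zero]
  push_cast
  field_simp
  ring

lemma catalanWeight_succ_right {n l : ℕ} (h : l ≤ n) :
    (l + 2) * (2 * n + l + 3) * (2 * n + 1 - l) * catalanWeight n (l + 1)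
      = -(2 * (2 * l + 1) * (n + l + 2) * (n - l)) * catalanWeight n l := by
  have hcat : ((l + 2) * catalan (l + 1) : ℚ) = 2 * (2 * l + 1) * catalan l :=
    mod_cast add_two_mul_catalan_succ l
  have hinv : invFactorial (n - (l + 1)) = (n - l) * invFactorial (n - l) := by
    simpa using invFactorial_eq_mul_of_eq_add_one (by ring : (n - l : ℤ) = n - (l + 1) + 1)
  have hfac : ((2 * n + 1 - l)! : ℚ) = (2 * n + 1 - l) * (2 * n - l)! := by
    rw [Nat.sub_add_comm (by lia), Nat.factorial_succ]
    push_cast [Nat.cast_sub (by lia : l ≤ 2 * n)]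
    ring
  rw [catalanWeight, catalanWeight, hfac, Nat.add_sub_add_right,
    show n + (l + 1) + 1 = n + l + 1 + 1 by ring, Nat.factorial_succ (n + l + 1),
    show 2 * n + (l + 1) + 2 = 2 * n + l + 2 + 1 by ring, Nat.factorial_succ (2 * n + l + 2),
    pow_succ]
  push_cast
  rw [hinv]
  field_simp
  linear_combination (-(2 * n + 1 - l) * (2 * n + l + 3) * (n + l + 2) * (n - l) *
    invFactorial (n - l)) * hcat

lemma fnk_sub_div_two_pow {n l : ℕ} (h : l ≤ n) :
    fnk n (n - l) / 2 ^ (n - (n - l)) = (-1) ^ n * ((3 * l + 2) * catalanWeight n l) := by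
  obtain ⟨k, rfl⟩ := Nat.exists_eq_add_of_le' h
  have hsign : (-1 : ℚ) ^ (k + l) * (-1) ^ l = (-1) ^ k := by
    rw [pow_add, mul_assoc, ← mul_pow]
    simp
  have hinv : invFactorial ((k + l : ℕ) - l) = (k ! : ℚ)⁻¹ := by simp [invFactorial_natCast]
  rw [catalanWeight, fnk, hinv, Nat.add_sub_cancel, ← hsign, Nat.add_sub_cancel_left,
    show 2 * (k + l) + 1 - l = k + l + k + 1 by lia,
    show 2 * (k + l) - k + 1 = k + l + l + 1 by lia,
    show 3 * (k + l) - k + 2 = 2 * (k + l) + l + 2 by lia]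
  push_cast
  field_simp
  ring

end CatalanWeight

section Telescoping

/-- The creative-telescoping certificate of the sum over `l` of
`(3l + 2) * catalanWeight n l * doublingDefect d l`: its differences in `l` are, up to a factor
depending only on `d`, a combination of the summands at `d` and `d + 1` with coefficients free of
`l`. -/
def telescoper (n d l : ℕ) : ℚ :=
  (l + 1) * (2 * n + l + 2) * (2 * n + 2 - l) * catalanWeight n l *
    ((d + l)! * invFactorial (2 * d + 2 - l) * invFactorial (2 * l - d - 1))

lemma telescoper_zero_right (n d : ℕ) : telescoper n d 0 = 0 := by
  simp [telescoper, invFactorial_of_neg (by lia : (-d - 1 : ℤ) < 0)]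

lemma telescoper_of_lt {n l : ℕ} (d : ℕ) (h : n < l) : telescoper n d l = 0 := by
  simp [telescoper, catalanWeight_of_lt h]

/-- The hypergeometric term `(d + l)! / ((2d + 2 - l)! (2l - d + 1)!)`. Each term of the
telescoping relation is a polynomial multiple of `catalanWeight n l * commonTerm d l`, which reduces
the relation to a polynomial identity. -/
def commonTerm (d l : ℕ) : ℚ :=
  (d + l)! * invFactorial (2 * d + 2 - l) * invFactorial (2 * l - d + 1)

lemma doublingDefect_eq_mul_commonTerm (d l : ℕ) :
    doublingDefect d l = (2 * d + 1 - l) * (2 * d + 2 - l) * commonTerm d l := by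
  have h₁ := invFactorial_eq_mul_of_eq_add_one (by ring : (2 * d + 1 - l : ℤ) = 2 * d - l + 1)
  have h₂ := invFactorial_eq_mul_of_eq_add_one (by ring : (2 * d + 2 - l : ℤ) = 2 * d + 1 - l + 1)
  rw [doublingDefect, commonTerm, h₁, h₂]
  push_cast
  ring

lemma doublingDefect_succ_eq_mul_commonTerm (d l : ℕ) :
    doublingDefect (d + 1) l = (d + l + 1) * (2 * l - d + 1) * commonTerm d l := by
  have h := invFactorial_eq_mul_of_eq_add_one (rfl : (2 * l - d + 1 : ℤ) = 2 * l - d + 1)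
  rw [doublingDefect, commonTerm, show d + 1 + l = d + l + 1 by ring, Nat.factorial_succ,
    show (2 * (d + 1 : ℕ) - l : ℤ) = 2 * d + 2 - l by push_cast; ring,
    show (2 * l - (d + 1 : ℕ) + 1 : ℤ) = 2 * l - d by push_cast; ring, h]
  push_cast
  ring

lemma telescoper_eq_mul_commonTerm (n d l : ℕ) :
    telescoper n d l = (l + 1) * (2 * n + l + 2) * (2 * n + 2 - l) * (2 * l - d) * (2 * l - d + 1) *
      catalanWeight n l * commonTerm d l := by
  have h₁ := invFactorial_eq_mul_of_eq_add_one (by ring : (2 * l - d : ℤ) = 2 * l - d - 1 + 1)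
  have h₂ := invFactorial_eq_mul_of_eq_add_one (rfl : (2 * l - d + 1 : ℤ) = 2 * l - d + 1)
  rw [telescoper, commonTerm, h₁, h₂]
  push_cast
  ring

lemma telescoper_succ_eq_mul_commonTerm {n l : ℕ} (d : ℕ) (hl : l ≤ n) :
    telescoper n d (l + 1) = -(2 * (2 * l + 1) * (n + l + 2) * (n - l) * (d + l + 1) *
      (2 * d + 2 - l)) * catalanWeight n l * commonTerm d l := by
  have hw := catalanWeight_succ_right hl
  have h := invFactorial_eq_mul_of_eq_add_one
    (by ring : (2 * d + 2 - l : ℤ) = 2 * d + 2 - (l + 1) + 1)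
  rw [telescoper, commonTerm, ← add_assoc, Nat.factorial_succ,
    show (2 * (l + 1 : ℕ) - d - 1 : ℤ) = 2 * l - d + 1 by push_cast; ring]
  push_cast at h ⊢
  rw [h]
  linear_combination (d + l + 1) * (2 * d + 2 - l) * ((d + l)! * invFactorial (2 * d + 2 - l) *
    invFactorial (2 * l - d + 1)) * hw

lemma catalanWeight_mul_doublingDefect_recurrence {n l : ℕ} (d : ℕ) (hl : l ≤ n) :
    d * (2 * n + d + 3) * (2 * n - d + 1) *
        ((3 * l + 2) * catalanWeight n l * doublingDefect d l)
      + 2 * (2 * d + 3) * (n - d) * (n + d + 2) *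
        ((3 * l + 2) * catalanWeight n l * doublingDefect (d + 1) l)
      = -(3 * (d + 1)) * (telescoper n d (l + 1) - telescoper n d l) := by
  rw [doublingDefect_eq_mul_commonTerm, doublingDefect_succ_eq_mul_commonTerm,
    telescoper_succ_eq_mul_commonTerm d hl, telescoper_eq_mul_commonTerm]
  ring

lemma sum_catalanWeight_mul_doublingDefect_recurrence (n d : ℕ) :
    d * (2 * n + d + 3) * (2 * n - d + 1) *
        ∑ l ∈ range (n + 1), (3 * l + 2) * catalanWeight n l * doublingDefect d l
      + 2 * (2 * d + 3) * (n - d) * (n + d + 2) *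
        ∑ l ∈ range (n + 1), (3 * l + 2) * catalanWeight n l * doublingDefect (d + 1) l = 0 := by
  rw [mul_sum, mul_sum, ← sum_add_distrib,
    sum_congr rfl fun l hl ↦
      catalanWeight_mul_doublingDefect_recurrence d (mem_range_succ_iff.mp hl),
    ← mul_sum, sum_range_sub, telescoper_of_lt d n.lt_succ_self, telescoper_zero_right,
    sub_zero, mul_zero]

lemma sum_catalanWeight_mul_doublingDefect_succ {n d : ℕ} (h : d < n) :
    ∑ l ∈ range (n + 1), (3 * l + 2) * catalanWeight n l * doublingDefect (d + 1) l = 0 := by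
  have leading_term : d * (2 * n + d + 3) * (2 * n - d + 1) *
      ∑ l ∈ range (n + 1), (3 * l + 2) * catalanWeight n l * doublingDefect d l = 0 := by
    cases d with
    | zero => simp
    | succ d => rw [sum_catalanWeight_mul_doublingDefect_succ (by lia), mul_zero]
  have recurrence := sum_catalanWeight_mul_doublingDefect_recurrence n d
  rw [leading_term, zero_add] at recurrence
  have hnd : (0 : ℚ) < n - d := sub_pos.mpr (mod_cast h)
  exact (mul_eq_zero.mp recurrence).resolve_left (by positivity)

lemma sum_catalanWeight_mul_partialRowSum {n d : ℕ} (h : d ≤ n) :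
    ∑ l ∈ range (n + 1), (3 * l + 2) * catalanWeight n l * partialRowSum d l = 2 ^ d := by
  induction d with
  | zero => simp [partialRowSum_zero_left, catalanWeight_zero_right]
  | succ d ih =>
    calc ∑ l ∈ range (n + 1), (3 * l + 2) * catalanWeight n l * partialRowSum (d + 1) l
      _ = 2 * ∑ l ∈ range (n + 1), (3 * l + 2) * catalanWeight n l * partialRowSum d l
          + (3 * d + 4) *
            ∑ l ∈ range (n + 1), (3 * l + 2) * catalanWeight n l * doublingDefect (d + 1) l := by
        rw [mul_sum, mul_sum, ← sum_add_distrib]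
        exact sum_congr rfl fun l _ ↦ by rw [partialRowSum_succ]; ring
      _ = 2 ^ (d + 1) := by
        rw [ih (by lia), sum_catalanWeight_mul_doublingDefect_succ h]
        ring

end Telescoping

lemma sum_gnik_sub_sub {n d l : ℕ} (hd : d ≤ n) (hl : l ≤ n) :
    ∑ j ∈ range (n + (n - l) + 1 - 2 * (n - d)), gnik n (n - d) (n - l) j
      = (-1) ^ n * ((3 * l + 2) * catalanWeight n l * partialRowSum d l) := by
  simp only [gnik, ← mul_sum, fnk_sub_div_two_pow hl]
  rw [show n + (n - l) + 1 - 2 * (n - d) = 2 * d + 1 - l by lia,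
    show 2 * n + 1 - (n - d) - (n - l) = d + l + 1 by lia, ← partialRowSum]
  ring

/-- For all `n ≥ 0` and `0 ≤ i ≤ n`:
`Σ_{k=0}^{n} Σ_{j=0}^{n+k−2i} g_{n,i}(k,j) = (−1)^n·2^{n−i}` (inner sum empty when `n+k−2i < 0`). -/
theorem sum_gnik_prime (n i : ℕ) (hi : i ≤ n) :
    ∑ k ∈ Finset.range (n+1), ∑ j ∈ Finset.range (n+k+1-2*i), gnik n i k j
      = (-1 : ℚ)^n * 2^(n-i) := by
  obtain ⟨d, hd, rfl⟩ : ∃ d ≤ n, i = n - d := ⟨n - i, by lia, by lia⟩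
  rw [← sum_range_reflect, Nat.sub_sub_self hd, ← sum_catalanWeight_mul_partialRowSum hd, mul_sum]
  exact sum_congr rfl fun l hl ↦ sum_gnik_sub_sub hd (mem_range_succ_iff.mp hl)
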